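/- Let H be a complex Hilbert space, c : H → H a self-adjoint unitary (c* = c and c∘c = id), and let p, P : H → H be orthogonal projections each commuting with c (c∘p = p∘c and c∘P = P∘c). Then the continuous linear map Φ : range(p) × range(1−P) × range(1−p) → H × range(1−P) defined by Φ(u, v₁, v₂) = (u + v₁ + c v₂, c v₁ − (1−P)(c u + v₂)) is bijective (note that c v₁ and (1−P)(c u + v₂) lie in range(1−P) because c commutes with P). In particular Φ is an isomorphism of Banach spaces. -/

import Mathlib

open ContinuousLinearMap

lemma mem_range_proj {H : Type*} [NormedAddCommGroup H] [InnerProductSpace ℂ H]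
    (p : H →L[ℂ] H) (hp : ∀ x, p (p x) = p x) (x : H) :
    x ∈ LinearMap.range p.toLinearMap ↔ p x = x := by
  constructor
  · rintro ⟨y, rfl⟩
    exact hp y
  · intro h
    exact ⟨x, h⟩

lemma mem_range_compl {H : Type*} [NormedAddCommGroup H] [InnerProductSpace ℂ H]
    (p : H →L[ℂ] H) (hp : ∀ x, p (p x) = p x) (x : H) :
    x ∈ LinearMap.range ((1 : H →L[ℂ] H) - p).toLinearMap ↔ p x = 0 := by
  constructor
  · rintro ⟨y, rfl⟩
    simp [hp]
  · intro h
    exact ⟨x, by simp [h]⟩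

/-- Invertibility of the operator-valued symbol `σ_X` at a unit edge
covector: the continuous linear map
`Φ(u, v₁, v₂) = (u + v₁ + c v₂, c v₁ − (1−P)(c u + v₂))`
from `range p × range (1−P) × range (1−p)` to `H × range (1−P)` is bijective, hence an
isomorphism of Banach spaces. -/
theorem statement3 {H : Type*} [NormedAddCommGroup H] [InnerProductSpace ℂ H] [CompleteSpace H]
    (c p P : H →L[ℂ] H)
    (hc_sa : ContinuousLinearMap.adjoint c = c) (hc2 : c ∘L c = 1)
    (hp_sa : ContinuousLinearMap.adjoint p = p) (hp2 : p ∘L p = p)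
    (hP_sa : ContinuousLinearMap.adjoint P = P) (hP2 : P ∘L P = P)
    (hcp : c ∘L p = p ∘L c) (hcP : c ∘L P = P ∘L c) :
    ∃ Φ : ↥(LinearMap.range p.toLinearMap) × ↥(LinearMap.range ((1 : H →L[ℂ] H) - P).toLinearMap) ×
            ↥(LinearMap.range ((1 : H →L[ℂ] H) - p).toLinearMap) →L[ℂ]
          H × ↥(LinearMap.range ((1 : H →L[ℂ] H) - P).toLinearMap),
      (∀ (u : ↥(LinearMap.range p.toLinearMap)) (v₁ : ↥(LinearMap.range ((1 : H →L[ℂ] H) - P).toLinearMap))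
          (v₂ : ↥(LinearMap.range ((1 : H →L[ℂ] H) - p).toLinearMap)),
        (Φ (u, v₁, v₂)).1 = (u : H) + (v₁ : H) + c (v₂ : H) ∧
        ((Φ (u, v₁, v₂)).2 : H) = c (v₁ : H) - ((1 : H →L[ℂ] H) - P) (c (u : H) + (v₂ : H))) ∧
      Function.Bijective Φ ∧
      ∃ Ψ : (↥(LinearMap.range p.toLinearMap) × ↥(LinearMap.range ((1 : H →L[ℂ] H) - P).toLinearMap) ×
              ↥(LinearMap.range ((1 : H →L[ℂ] H) - p).toLinearMap)) ≃L[ℂ]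
            (H × ↥(LinearMap.range ((1 : H →L[ℂ] H) - P).toLinearMap)),
        ∀ x, Ψ x = Φ x := by
  have hR : ∀ x, ((1 : H →L[ℂ] H) - P) x = x - P x := fun _ => rfl
  have hcc : ∀ x, c (c x) = x := fun x => by simpa using congrArg (fun f => f x) hc2
  have hpp : ∀ x, p (p x) = p x := fun x => by simpa using congrArg (fun f => f x) hp2
  have hPP : ∀ x, P (P x) = P x := fun x => by simpa using congrArg (fun f => f x) hP2
  have hpc : ∀ x, p (c x) = c (p x) := fun x => by
    simpa using (congrArg (fun f => f x) hcp).symm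
  have hPc : ∀ x, P (c x) = c (P x) := fun x => by
    simpa using (congrArg (fun f => f x) hcP).symm
  have hu := mem_range_proj p hpp
  have hv := mem_range_compl P hPP
  have hw := mem_range_compl p hpp
  set U := LinearMap.range p.toLinearMap
  set V := LinearMap.range ((1 : H →L[ℂ] H) - P).toLinearMap
  set W := LinearMap.range ((1 : H →L[ℂ] H) - p).toLinearMap
  have hU : ∀ u : U, p (u : H) = u := fun u => (hu u).1 u.2
  have hV : ∀ u : V, P (u : H) = 0 := fun u => (hv u).1 u.2
  have hW : ∀ u : W, p (u : H) = 0 := fun u => (hw u).1 u.2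
  let eu : U × V × W →L[ℂ] H := U.subtypeL ∘L ContinuousLinearMap.fst ℂ U (V × W)
  let ev : U × V × W →L[ℂ] H :=
    V.subtypeL ∘L ContinuousLinearMap.fst ℂ V W ∘L ContinuousLinearMap.snd ℂ U (V × W)
  let ew : U × V × W →L[ℂ] H :=
    W.subtypeL ∘L ContinuousLinearMap.snd ℂ V W ∘L ContinuousLinearMap.snd ℂ U (V × W)
  let Φ : U × V × W →L[ℂ] H × V := (eu + ev + c ∘L ew).prod
    ((c ∘L ev - ((1 : H →L[ℂ] H) - P) ∘L (c ∘L eu + ew)).codRestrict V (by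
      rintro ⟨u, v, w⟩
      rw [hv]
      simp [eu, ev, ew, hPP, hPc, hV]))
  let a : H × V →L[ℂ] H := (1 / 2 : ℂ) • (((1 : H →L[ℂ] H) - P) ∘L ContinuousLinearMap.fst ℂ H V
    + c ∘L V.subtypeL ∘L ContinuousLinearMap.snd ℂ H V)
  let b : H × V →L[ℂ] H := ContinuousLinearMap.fst ℂ H V - a
  let Θ : H × V →L[ℂ] U × V × W :=
    ((p ∘L b).codRestrict U (fun x => (hu _).2 (by simp [hpp]))).prod
      ((a.codRestrict V (by
        rintro ⟨f, g⟩
        rw [hv]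
        simp [a, hPP, hPc, hV])).prod
      ((c ∘L (((1 : H →L[ℂ] H) - p) ∘L b)).codRestrict W (fun x => (hw _).2 (by
        simp [hpp, hpc]))))
  have hΦ1 : ∀ u v w, (Φ (u, v, w)).1 = (u : H) + (v : H) + c (w : H) := fun _ _ _ => rfl
  have hΦ2 : ∀ u v w, ((Φ (u, v, w)).2 : H)
      = c (v : H) - ((1 : H →L[ℂ] H) - P) (c (u : H) + (w : H)) := fun _ _ _ => rfl
  have ha : ∀ x, a x = (1 / 2 : ℂ) • ((x.1 - P x.1) + c (x.2 : H)) := fun _ => rfl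
  have hb : ∀ x, b x = x.1 - a x := fun _ => rfl
  have hΘ1 : ∀ x, ((Θ x).1 : H) = p (b x) := fun _ => rfl
  have hΘ2 : ∀ x, ((Θ x).2.1 : H) = a x := fun _ => rfl
  have hΘ3 : ∀ x, ((Θ x).2.2 : H) = c (b x - p (b x)) := fun _ => rfl
  have hleft : Function.LeftInverse Θ Φ := by
    rintro ⟨u, v, w⟩
    have h1 : a (Φ (u, v, w)) = v := by
      rw [ha, hΦ1, hΦ2]
      simp only [map_add, map_sub, hR, map_zero, hcc, hV, hPc]
      module
    have h2 : b (Φ (u, v, w)) = u + c w := by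
      rw [hb, h1, hΦ1]; abel
    refine Prod.ext (Subtype.ext ?_) (Prod.ext (Subtype.ext ?_) (Subtype.ext ?_))
    · rw [hΘ1, h2]; simp [hU, hpc, hW]
    · rw [hΘ2, h1]
    · rw [hΘ3, h2]; simp [hU, hpc, hW, hcc]
  have hright : Function.RightInverse Θ Φ := by
    intro x
    have e1 := hΦ1 (Θ x).1 (Θ x).2.1 (Θ x).2.2
    have e2 := hΦ2 (Θ x).1 (Θ x).2.1 (Θ x).2.2
    rw [hΘ1, hΘ2, hΘ3] at e1 e2
    refine Prod.ext (e1.trans ?_) (Subtype.ext (e2.trans ?_))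
    · rw [hcc, hb]; abel
    · have h3 : c (p (b x)) + c (b x - p (b x)) = c (b x) := by
        rw [← map_add]; congr 1; abel
      rw [h3, hb, ha]
      simp only [map_add, map_sub, map_smul, hR, map_zero, hcc, hV, hPc, hPP]
      module
  refine ⟨Φ, fun u v w => ⟨hΦ1 u v w, hΦ2 u v w⟩, ⟨hleft.injective, hright.surjective⟩,
    ContinuousLinearEquiv.equivOfInverse Φ Θ hleft hright, fun x => rfl⟩
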